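/- Fix c ∈ ℂ and take t = 1. Let e = (1 + s)/2 ∈ H_{1,c}; the corner space B_{1,c} = e·H_{1,c}·e is a ℂ-algebra with multiplicative unit e under the addition and multiplication inherited from H_{1,c}. Let (e₊, h, e₋) be the standard basis of sl₂(ℂ), with [h, e₊] = 2e₊, [h, e₋] = −2e₋, [e₊, e₋] = h, and let C = e₊e₋ + e₋e₊ + (1/2)h² be the Casimir element of the universal enveloping algebra U(sl₂(ℂ)). Then there is an isomorphism of ℂ-algebras U(sl₂(ℂ))/⟨C − (1/2)(c − 1/2)(c + 3/2)⟩ ≅ B_{1,c} sending the image of e₊ to (1/2)·e·x²·e and the image of e₋ to −(1/2)·e·ξ²·e, where ⟨C − λ⟩ denotes the two-sided ideal generated by C − λ. -/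

import Mathlib

/-!
Write `B = U(sl₂)/⟨C - λ⟩` with `λ = (1/2)(c - 1/2)(c + 3/2)`. The elements `x²e/2`, `(xξ + ξx)e/2`
and `-ξ²e/2` of `eHe` satisfy the relations of `e₊`, `h`, `e₋` in `B`, by direct computation in
`H = H_{1,c}`; this gives an algebra map `φ : B → eHe` (`exists_corner_lift`).

*Surjectivity.* The subspace `φ(B) + x φ(B) + ξ φ(B)` is stable under left multiplication by `s`,
`x` and `ξ` (`IsCherednikTriple.mul_stable`), because `x²e`, `xξe`, `ξxe` and `ξ²e` lie in `φ(B)`.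
It contains `e`, hence all of `He`; multiplying by `e` on the left kills the last two summands, so
`eHe = φ(B)`.

*Injectivity.* The Casimir relation makes `e₊e₋` and `e₋e₊` polynomials in `h`, so every element of
`B` has the form `∑ₖ wₖ fₖ(h)` with `wₖ = e₊ᵏ` for `k ≥ 0` and `wₖ = e₋⁻ᵏ` for `k < 0`
(`wtSum_surjective`). To separate these elements, let `H` act by Dunkl operators on the span of
the powers `x^(X+n)`, `n ∈ ℤ`, over `ℂ[X]`, the exponent `X` being an indeterminate. Applied to
`x^X`, the element above has a nonzero multiple of `fₖ(X + 1/2 - c)` as its coefficient of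
`x^(X+2k)` (`eq_zero_of_rep_wtSum`), so it acts by zero only if all `fₖ` vanish. Since the exponent
is generic, no value of `c` is exceptional, and no PBW theorem for `H` or `U(sl₂)` is needed.
-/

open FreeAlgebra

/-- The defining relations of the rational Cherednik algebra `H_{t,c}` of type `A₁`,
on the free algebra on three generators `s = ι 0`, `x = ι 1`, `ξ = ι 2`:
`s² - 1`, `s x + x s`, `s ξ + ξ s` and `ξ x - x ξ - t 1 + 2 c s`. -/
inductive CherednikRel (t c : ℂ) : FreeAlgebra ℂ (Fin 3) → FreeAlgebra ℂ (Fin 3) → Prop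
  | s_sq : CherednikRel t c (ι ℂ (0 : Fin 3) * ι ℂ (0 : Fin 3) - 1) 0
  | s_x : CherednikRel t c (ι ℂ (0 : Fin 3) * ι ℂ (1 : Fin 3) + ι ℂ (1 : Fin 3) * ι ℂ (0 : Fin 3)) 0
  | s_xi : CherednikRel t c (ι ℂ (0 : Fin 3) * ι ℂ (2 : Fin 3) + ι ℂ (2 : Fin 3) * ι ℂ (0 : Fin 3)) 0
  | xi_x : CherednikRel t c
      (ι ℂ (2 : Fin 3) * ι ℂ (1 : Fin 3) - ι ℂ (1 : Fin 3) * ι ℂ (2 : Fin 3) -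
        algebraMap ℂ (FreeAlgebra ℂ (Fin 3)) t + (2 * c) • ι ℂ (0 : Fin 3)) 0

/-- The rational Cherednik algebra `H_{t,c}` of type `A₁`. -/
abbrev CherednikA1 (t c : ℂ) := RingQuot (CherednikRel t c)

/-- The generator `s` of `H_{t,c}`. -/
noncomputable def CherednikA1.S (t c : ℂ) : CherednikA1 t c :=
  RingQuot.mkAlgHom ℂ (CherednikRel t c) (ι ℂ (0 : Fin 3))

/-- The generator `x` of `H_{t,c}`. -/
noncomputable def CherednikA1.x (t c : ℂ) : CherednikA1 t c :=
  RingQuot.mkAlgHom ℂ (CherednikRel t c) (ι ℂ (1 : Fin 3))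

/-- The generator `ξ` of `H_{t,c}`. -/
noncomputable def CherednikA1.xi (t c : ℂ) : CherednikA1 t c :=
  RingQuot.mkAlgHom ℂ (CherednikRel t c) (ι ℂ (2 : Fin 3))

/-- The symmetrizing idempotent `e = (1+s)/2` of `H_{t,c}`. -/
noncomputable def CherednikA1.e (t c : ℂ) : CherednikA1 t c :=
  (1/2 : ℂ) • (1 + CherednikA1.S t c)

/-- The presentation of `U(sl₂(ℂ))/⟨C - λ⟩` by generators `e₊ = ι 0`, `h = ι 1`,
`e₋ = ι 2` and relations `[h,e₊] = 2e₊`, `[h,e₋] = -2e₋`, `[e₊,e₋] = h`, together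
with `C = e₊e₋ + e₋e₊ + (1/2)h² = λ`. -/
inductive Sl2CasimirRel (lam : ℂ) : FreeAlgebra ℂ (Fin 3) → FreeAlgebra ℂ (Fin 3) → Prop
  | h_ep : Sl2CasimirRel lam
      (ι ℂ (1 : Fin 3) * ι ℂ (0 : Fin 3) - ι ℂ (0 : Fin 3) * ι ℂ (1 : Fin 3) -
        (2 : ℂ) • ι ℂ (0 : Fin 3)) 0
  | h_em : Sl2CasimirRel lam
      (ι ℂ (1 : Fin 3) * ι ℂ (2 : Fin 3) - ι ℂ (2 : Fin 3) * ι ℂ (1 : Fin 3) +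
        (2 : ℂ) • ι ℂ (2 : Fin 3)) 0
  | ep_em : Sl2CasimirRel lam
      (ι ℂ (0 : Fin 3) * ι ℂ (2 : Fin 3) - ι ℂ (2 : Fin 3) * ι ℂ (0 : Fin 3) -
        ι ℂ (1 : Fin 3)) 0
  | casimir : Sl2CasimirRel lam
      (ι ℂ (0 : Fin 3) * ι ℂ (2 : Fin 3) + ι ℂ (2 : Fin 3) * ι ℂ (0 : Fin 3) +
        (1/2 : ℂ) • (ι ℂ (1 : Fin 3) * ι ℂ (1 : Fin 3)) -
        algebraMap ℂ (FreeAlgebra ℂ (Fin 3)) lam) 0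

/-- The central quotient `U(sl₂(ℂ))/⟨C - λ⟩`. -/
abbrev Sl2CasimirQuot (lam : ℂ) := RingQuot (Sl2CasimirRel lam)

/-! ### Algebra maps into a corner -/

section Corner

variable {H : Type*} [Ring H] [Algebra ℂ H] {e : H}

/-- The corner `e H e` of a ℂ-algebra, as a ℂ-algebra with unit `e`. -/
noncomputable abbrev cornerAlgebra (he : IsIdempotentElem e) : Algebra ℂ he.Corner where
  smul r z := ⟨r • z.1, r • z.1, by
    change e * (r • (z.1 : H)) * e = r • (z.1 : H)
    have h := (Subsemigroup.mem_corner_iff he).mp z.2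
    rw [mul_smul_comm, smul_mul_assoc, h.1, h.2]⟩
  algebraMap :=
    { toFun := fun r => ⟨r • e, r • e, by simp [he.eq]⟩
      map_one' := Subtype.ext (one_smul _ _)
      map_mul' := fun r r' => Subtype.ext (by
        change (r * r') • e = (r • e) * (r' • e)
        rw [smul_mul_smul_comm, he.eq])
      map_zero' := Subtype.ext (zero_smul _ _)
      map_add' := fun r r' => Subtype.ext (add_smul _ _ _) }
  commutes' r z := Subtype.ext (by
    have h := (Subsemigroup.mem_corner_iff he).mp z.2
    change (r • e) * z.1 = z.1 * (r • e)
    rw [mul_smul_comm, smul_mul_assoc, h.1, h.2])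
  smul_def' r z := Subtype.ext (by
    have h := (Subsemigroup.mem_corner_iff he).mp z.2
    change r • z.1 = (r • e) * z.1
    rw [smul_mul_assoc, h.1])

/-- Three elements of the corner `e H e` satisfying the defining relations of
`U(sl₂)/⟨C - λ⟩` (with `e` in place of `1`) give an algebra map into the corner. -/
theorem exists_corner_lift (he : IsIdempotentElem e) {lam : ℂ} {P K Q : H}
    (hP : e * P * e = P) (hK : e * K * e = K) (hQ : e * Q * e = Q)
    (h1 : K * P - P * K - (2 : ℂ) • P = 0) (h2 : K * Q - Q * K + (2 : ℂ) • Q = 0)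
    (h3 : P * Q - Q * P - K = 0)
    (h4 : P * Q + Q * P + (1 / 2 : ℂ) • (K * K) - lam • e = 0) :
    ∃ φ : Sl2CasimirQuot lam →ₗ[ℂ] H,
      φ 1 = e ∧ (∀ a b, φ (a * b) = φ a * φ b) ∧ (∀ a, e * φ a * e = φ a) ∧
      φ (RingQuot.mkAlgHom ℂ (Sl2CasimirRel lam) (ι ℂ 0)) = P ∧
      φ (RingQuot.mkAlgHom ℂ (Sl2CasimirRel lam) (ι ℂ 1)) = K ∧
      φ (RingQuot.mkAlgHom ℂ (Sl2CasimirRel lam) (ι ℂ 2)) = Q := by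
  let _ := cornerAlgebra he
  let g : Fin 3 → he.Corner := ![⟨P, P, hP⟩, ⟨K, K, hK⟩, ⟨Q, Q, hQ⟩]
  have hg : ∀ ⦃a b⦄, Sl2CasimirRel lam a b → FreeAlgebra.lift ℂ g a = FreeAlgebra.lift ℂ g b := by
    intro a b hab
    cases hab <;>
    · simp only [map_sub, map_add, map_mul, map_smul, map_zero, FreeAlgebra.lift_ι_apply,
        AlgHom.commutes]
      exact Subtype.ext (by assumption)
  let ψ := RingQuot.liftAlgHom ℂ (s := Sl2CasimirRel lam) ⟨FreeAlgebra.lift ℂ g, hg⟩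
  have hψ : ∀ i, ψ (RingQuot.mkAlgHom ℂ (Sl2CasimirRel lam) (ι ℂ i)) = g i := fun i => by
    simp only [ψ, RingQuot.liftAlgHom_mkAlgHom_apply, FreeAlgebra.lift_ι_apply]
  refine ⟨{ toFun := fun a => (ψ a).1
            map_add' := fun a b => by rw [map_add]; rfl
            map_smul' := fun r a => by rw [map_smul]; rfl }, ?_, ?_, ?_, ?_, ?_, ?_⟩
  · change (ψ 1).1 = e
    rw [map_one]; rfl
  · intro a b
    change (ψ (a * b)).1 = (ψ a).1 * (ψ b).1
    rw [map_mul]; rfl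
  · intro a
    have h := (Subsemigroup.mem_corner_iff he).mp (ψ a).2
    change e * (ψ a).1 * e = (ψ a).1
    rw [h.1, h.2]
  · exact congrArg Subtype.val (hψ 0)
  · exact congrArg Subtype.val (hψ 1)
  · exact congrArg Subtype.val (hψ 2)

end Corner

/-! ### The `sl₂`-triple in the spherical subalgebra -/

/-- Elements `s, x, ξ` of a ℂ-algebra satisfying the defining relations of `H_{1,c}`, oriented
as rewriting rules towards the normal form `xⁱ ξʲ sᵏ`. -/
structure IsCherednikTriple {A : Type*} [Ring A] [Algebra ℂ A] (c : ℂ) (s x ξ : A) : Prop where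
  s_s : s * s = 1
  s_x : s * x = -(x * s)
  s_ξ : s * ξ = -(ξ * s)
  ξ_x : ξ * x = x * ξ + (1 - (2 * c) • s)

namespace IsCherednikTriple

variable {A : Type*} [Ring A] [Algebra ℂ A] {c : ℂ} {s x ξ : A}

theorem s_x_mul (T : IsCherednikTriple c s x ξ) (w : A) : s * (x * w) = -(x * (s * w)) := by
  rw [← mul_assoc, T.s_x, neg_mul, mul_assoc]

theorem s_ξ_mul (T : IsCherednikTriple c s x ξ) (w : A) : s * (ξ * w) = -(ξ * (s * w)) := by
  rw [← mul_assoc, T.s_ξ, neg_mul, mul_assoc]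

theorem ξ_x_mul (T : IsCherednikTriple c s x ξ) (w : A) :
    ξ * (x * w) = x * (ξ * w) + (w - (2 * c) • (s * w)) := by
  rw [← mul_assoc, T.ξ_x, add_mul, sub_mul, one_mul, mul_assoc, smul_mul_assoc]

/-- The symmetrizing idempotent `e = (1 + s)/2`. -/
noncomputable def avg (s : A) : A := (1 / 2 : ℂ) • (1 + s)

theorem avg_mul (w : A) : avg s * w = (1 / 2 : ℂ) • (w + s * w) := by
  rw [avg, smul_mul_assoc, add_mul, one_mul]

theorem s_avg (T : IsCherednikTriple c s x ξ) : s * avg s = avg s := by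
  rw [avg, mul_smul_comm, mul_add, mul_one, T.s_s, add_comm]

theorem avg_idem (T : IsCherednikTriple c s x ξ) : IsIdempotentElem (avg s) := by
  rw [IsIdempotentElem, avg_mul, T.s_avg]
  module

theorem s_mul_of_avg_mul (T : IsCherednikTriple c s x ξ) {w : A} (hw : avg s * w = w) :
    s * w = w := by
  rw [← hw, ← mul_assoc, T.s_avg]

/-- The image of `e₊` in the corner, written without the redundant left factor `e`. -/
noncomputable def P (s x : A) : A := (1 / 2 : ℂ) • (x * (x * avg s))

/-- The image of `e₋` in the corner, written without the redundant left factor `e`. -/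
noncomputable def Q (s ξ : A) : A := (-(1 / 2) : ℂ) • (ξ * (ξ * avg s))

/-- The image of `h` in the corner; it equals `(xξ + ξx)e/2`. -/
noncomputable def K (c : ℂ) (s x ξ : A) : A := x * (ξ * avg s) + (1 / 2 - c) • avg s

theorem avg_P (T : IsCherednikTriple c s x ξ) : avg s * P s x = P s x := by
  simp only [P, mul_smul_comm, avg_mul, T.s_x_mul, T.s_avg, mul_neg, neg_neg]
  module

theorem avg_Q (T : IsCherednikTriple c s x ξ) : avg s * Q s ξ = Q s ξ := by
  simp only [Q, mul_smul_comm, avg_mul, T.s_ξ_mul, T.s_avg, mul_neg, neg_neg]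
  module

theorem P_eq (T : IsCherednikTriple c s x ξ) :
    (1 / 2 : ℂ) • (avg s * x * x * avg s) = P s x := by
  rw [mul_assoc, mul_assoc, ← mul_smul_comm]
  exact T.avg_P

theorem Q_eq (T : IsCherednikTriple c s x ξ) :
    (-(1 / 2) : ℂ) • (avg s * ξ * ξ * avg s) = Q s ξ := by
  rw [mul_assoc, mul_assoc, ← mul_smul_comm]
  exact T.avg_Q

theorem avg_K (T : IsCherednikTriple c s x ξ) : avg s * K c s x ξ = K c s x ξ := by
  simp only [K, mul_add, mul_smul_comm, avg_mul, T.s_x_mul, T.s_ξ_mul, T.s_avg, mul_neg, neg_neg]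
  module

theorem P_avg (T : IsCherednikTriple c s x ξ) : P s x * avg s = P s x := by
  simp only [P, smul_mul_assoc, mul_assoc, T.avg_idem.eq]

theorem Q_avg (T : IsCherednikTriple c s x ξ) : Q s ξ * avg s = Q s ξ := by
  simp only [Q, smul_mul_assoc, mul_assoc, T.avg_idem.eq]

theorem K_avg (T : IsCherednikTriple c s x ξ) : K c s x ξ * avg s = K c s x ξ := by
  simp only [K, add_mul, smul_mul_assoc, mul_assoc, T.avg_idem.eq]

theorem P_mul {w : A} (hw : avg s * w = w) : P s x * w = (1 / 2 : ℂ) • (x * (x * w)) := by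
  rw [P, smul_mul_assoc, mul_assoc, mul_assoc, hw]

theorem Q_mul {w : A} (hw : avg s * w = w) : Q s ξ * w = (-(1 / 2) : ℂ) • (ξ * (ξ * w)) := by
  rw [Q, smul_mul_assoc, mul_assoc, mul_assoc, hw]

theorem K_mul {w : A} (hw : avg s * w = w) :
    K c s x ξ * w = x * (ξ * w) + (1 / 2 - c) • w := by
  rw [K, add_mul, mul_assoc, mul_assoc, smul_mul_assoc, hw]

theorem rel_KP (T : IsCherednikTriple c s x ξ) :
    K c s x ξ * P s x - P s x * K c s x ξ - (2 : ℂ) • P s x = 0 := by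
  rw [K_mul T.avg_P, P_mul T.avg_K, P, K]
  simp only [mul_add, mul_sub, mul_smul_comm, T.s_avg, T.s_x_mul, T.ξ_x_mul, mul_neg]
  module

theorem rel_KQ (T : IsCherednikTriple c s x ξ) :
    K c s x ξ * Q s ξ - Q s ξ * K c s x ξ + (2 : ℂ) • Q s ξ = 0 := by
  rw [K_mul T.avg_Q, Q_mul T.avg_K, Q, K]
  simp only [mul_add, mul_sub, mul_smul_comm, T.s_avg, T.s_ξ_mul, T.ξ_x_mul, mul_neg]
  module

theorem rel_PQ (T : IsCherednikTriple c s x ξ) :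
    P s x * Q s ξ - Q s ξ * P s x - K c s x ξ = 0 := by
  rw [P_mul T.avg_Q, Q_mul T.avg_P, P, Q, K]
  simp only [mul_add, mul_sub, mul_smul_comm, T.s_avg, T.s_x_mul, T.s_ξ_mul, T.ξ_x_mul, mul_neg]
  module

theorem rel_casimir (T : IsCherednikTriple c s x ξ) :
    P s x * Q s ξ + Q s ξ * P s x + (1 / 2 : ℂ) • (K c s x ξ * K c s x ξ) -
      ((1 / 2 : ℂ) * (c - 1 / 2) * (c + 3 / 2)) • avg s = 0 := by
  rw [P_mul T.avg_Q, Q_mul T.avg_P, K_mul T.avg_K, P, Q, K]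
  simp only [mul_add, mul_sub, mul_smul_comm, T.s_avg, T.s_x_mul, T.s_ξ_mul, T.ξ_x_mul, mul_neg]
  module

/-- A subspace of the form `φ(B) + x φ(B) + ξ φ(B)`, with `φ : B → eAe` hitting `P`, `K`, `Q`, is
stable under left multiplication by `s`, `x` and `ξ`. -/
theorem mul_stable (T : IsCherednikTriple c s x ξ) {B : Type*} [Ring B] [Algebra ℂ B]
    (φ : B →ₗ[ℂ] A) (hmul : ∀ a b, φ (a * b) = φ a * φ b)
    (hcorner : ∀ a, avg s * φ a * avg s = φ a) {p k q : B}
    (hp : φ p = P s x) (hk : φ k = K c s x ξ) (hq : φ q = Q s ξ) (u : A)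
    (hu : u = s ∨ u = x ∨ u = ξ) (a b d : B) :
    ∃ a' b' d', u * (φ a + x * φ b + ξ * φ d) = φ a' + x * φ b' + ξ * φ d' := by
  have hl : ∀ a, avg s * φ a = φ a := fun a => by
    rw [← hcorner a, ← mul_assoc, ← mul_assoc, T.avg_idem.eq]
  have hs : ∀ a, s * φ a = φ a := fun a => T.s_mul_of_avg_mul (hl a)
  rcases hu with rfl | rfl | rfl
  · refine ⟨a, -b, -d, ?_⟩
    simp only [mul_add, T.s_x_mul, T.s_ξ_mul, hs, map_neg, mul_neg]
  · refine ⟨(2 : ℂ) • (p * b) + (k * d - (1 / 2 - c) • d), a, 0, ?_⟩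
    simp only [mul_add, map_add, map_sub, map_smul, hmul, hp, hk, P_mul (hl b), K_mul (hl d),
      map_zero, mul_zero]
    module
  · refine ⟨(k * b + (1 / 2 - c) • b) - (2 : ℂ) • (q * d), 0, a, ?_⟩
    simp only [mul_add, map_add, map_sub, map_smul, hmul, hq, hk, Q_mul (hl d), K_mul (hl b),
      map_zero, mul_zero, T.ξ_x_mul, hs]
    module

/-- The `e`-part of an element of `φ(B) + x φ(B) + ξ φ(B)` is its component in `φ(B)`. -/
theorem avg_mul_sum (T : IsCherednikTriple c s x ξ) {u v w : A} (hu : avg s * u = u)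
    (hv : avg s * v = v) (hw : avg s * w = w) : avg s * (u + x * v + ξ * w) = u := by
  simp only [avg_mul, mul_add, T.s_x_mul, T.s_ξ_mul, T.s_mul_of_avg_mul hu,
    T.s_mul_of_avg_mul hv, T.s_mul_of_avg_mul hw]
  module

end IsCherednikTriple

theorem CherednikA1.isCherednikTriple (c : ℂ) :
    IsCherednikTriple c (CherednikA1.S 1 c) (CherednikA1.x 1 c) (CherednikA1.xi 1 c) where
  s_s := by
    have h := RingQuot.mkAlgHom_rel ℂ (CherednikRel.s_sq (t := 1) (c := c))
    rw [map_sub, map_mul, map_one, map_zero] at h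
    exact sub_eq_zero.mp h
  s_x := by
    have h := RingQuot.mkAlgHom_rel ℂ (CherednikRel.s_x (t := 1) (c := c))
    rw [map_add, map_mul, map_mul, map_zero] at h
    exact eq_neg_of_add_eq_zero_left h
  s_ξ := by
    have h := RingQuot.mkAlgHom_rel ℂ (CherednikRel.s_xi (t := 1) (c := c))
    rw [map_add, map_mul, map_mul, map_zero] at h
    exact eq_neg_of_add_eq_zero_left h
  ξ_x := by
    have h := RingQuot.mkAlgHom_rel ℂ (CherednikRel.xi_x (t := 1) (c := c))
    simp only [map_sub, map_add, map_mul, map_one, map_zero, map_smul] at h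
    change CherednikA1.xi 1 c * CherednikA1.x 1 c - CherednikA1.x 1 c * CherednikA1.xi 1 c - 1 +
      (2 * c) • CherednikA1.S 1 c = 0 at h
    rw [← sub_eq_zero, ← h]
    abel

/-! ### The generic Laurent representation -/

section Representation

open Polynomial

/-- The parity sign `(-1)ⁿ`. -/
noncomputable def sgn (n : ℤ) : ℂ := if Even n then 1 else -1

theorem sgn_add_one (n : ℤ) : sgn (n + 1) = -sgn n := by
  unfold sgn
  by_cases h : Even n <;> simp [h]

theorem sgn_sub_one (n : ℤ) : sgn (n - 1) = -sgn n := by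
  have h := sgn_add_one (n - 1)
  rw [sub_add_cancel] at h
  rw [h, neg_neg]

theorem sgn_mul_self (n : ℤ) : sgn n * sgn n = 1 := by
  unfold sgn
  split_ifs <;> norm_num

theorem sgn_two_mul (n : ℤ) : sgn (2 * n) = 1 := by
  simp [sgn]

/-- The Dunkl coefficient: `ξ` sends `x^(X+n)` to `dunkl c n • x^(X+n-1)`, with a formal
exponent shift `X`. -/
noncomputable def dunkl (c : ℂ) (n : ℤ) : ℂ[X] := X + C ((n : ℂ) - c * (1 - sgn n))

theorem dunkl_ne_zero (c : ℂ) (n : ℤ) : dunkl c n ≠ 0 := X_add_C_ne_zero _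

theorem dunkl_add_one (c : ℂ) (n : ℤ) :
    dunkl c (n + 1) = dunkl c n + C (1 - 2 * c * sgn n) := by
  rw [dunkl, dunkl, sgn_add_one, add_assoc, ← C_add]
  push_cast
  ring_nf

/-- `s` in the generic Laurent representation: the parity operator. -/
noncomputable def repS : Module.End ℂ (ℤ →₀ ℂ[X]) :=
  Finsupp.lsum ℂ fun n => Finsupp.lsingle n ∘ₗ (sgn n • LinearMap.id)

/-- `x` in the generic Laurent representation: the shift. -/
noncomputable def repX : Module.End ℂ (ℤ →₀ ℂ[X]) :=
  Finsupp.lsum ℂ fun n => Finsupp.lsingle (n + 1)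

/-- `ξ` in the generic Laurent representation: the Dunkl operator. -/
noncomputable def repXi (c : ℂ) : Module.End ℂ (ℤ →₀ ℂ[X]) :=
  Finsupp.lsum ℂ fun n => Finsupp.lsingle (n - 1) ∘ₗ LinearMap.mulLeft ℂ (dunkl c n)

theorem repS_single (n : ℤ) (g : ℂ[X]) :
    repS (Finsupp.single n g) = Finsupp.single n (sgn n • g) := by
  simp [repS]

theorem repX_single (n : ℤ) (g : ℂ[X]) :
    repX (Finsupp.single n g) = Finsupp.single (n + 1) g := by
  simp [repX]

theorem repXi_single (c : ℂ) (n : ℤ) (g : ℂ[X]) :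
    repXi c (Finsupp.single n g) = Finsupp.single (n - 1) (dunkl c n * g) := by
  simp [repXi]

/-- The three operators act on the span of the formal powers `x^(X+n)`, `n ∈ ℤ`, over `ℂ[X]`;
`Finsupp.single n g` stands for `g x^(X+n)`. -/
theorem rep_isCherednikTriple (c : ℂ) : IsCherednikTriple c repS repX (repXi c) where
  s_s := by
    refine Finsupp.lhom_ext fun n g => ?_
    simp only [Module.End.mul_apply, repS_single, smul_smul, sgn_mul_self, one_smul,
      Module.End.one_apply]
  s_x := by
    refine Finsupp.lhom_ext fun n g => ?_
    simp only [Module.End.mul_apply, repS_single, repX_single, sgn_add_one, LinearMap.neg_apply,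
      neg_smul, Finsupp.single_neg]
  s_ξ := by
    refine Finsupp.lhom_ext fun n g => ?_
    simp only [Module.End.mul_apply, repS_single, repXi_single, sgn_sub_one, LinearMap.neg_apply,
      neg_smul, Finsupp.single_neg, mul_smul_comm]
  ξ_x := by
    refine Finsupp.lhom_ext fun n g => ?_
    simp only [Module.End.mul_apply, repS_single, repX_single, repXi_single, LinearMap.add_apply,
      LinearMap.sub_apply, LinearMap.smul_apply, Module.End.one_apply, add_sub_cancel_right,
      sub_add_cancel, dunkl_add_one, Finsupp.smul_single, ← Finsupp.single_add,
      ← Finsupp.single_sub, smul_smul]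
    rw [add_mul, C_mul', sub_smul, one_smul]

/-- Three operators satisfying the relations of `H_{1,c}` define a representation of it. -/
theorem exists_rep {A : Type*} [Ring A] [Algebra ℂ A] {c : ℂ} {s x ξ : A}
    (T : IsCherednikTriple c s x ξ) :
    ∃ ρ : CherednikA1 1 c →ₐ[ℂ] A, ρ (CherednikA1.S 1 c) = s ∧ ρ (CherednikA1.x 1 c) = x ∧
      ρ (CherednikA1.xi 1 c) = ξ := by
  have hg : ∀ ⦃a b⦄, CherednikRel 1 c a b →
      FreeAlgebra.lift ℂ ![s, x, ξ] a = FreeAlgebra.lift ℂ ![s, x, ξ] b := by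
    intro a b hab
    cases hab <;>
    simp only [map_sub, map_add, map_mul, map_smul, map_zero, map_one, FreeAlgebra.lift_ι_apply,
      Matrix.cons_val] <;>
    simp [T.s_s, T.s_x, T.s_ξ, T.ξ_x]
  refine ⟨RingQuot.liftAlgHom ℂ ⟨FreeAlgebra.lift ℂ ![s, x, ξ], hg⟩, ?_, ?_, ?_⟩ <;>
  simp [CherednikA1.S, CherednikA1.x, CherednikA1.xi]

open IsCherednikTriple in
theorem rep_avg_single (k : ℤ) (g : ℂ[X]) :
    avg repS (Finsupp.single (2 * k) g) = Finsupp.single (2 * k) g := by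
  simp only [avg, LinearMap.smul_apply, LinearMap.add_apply, Module.End.one_apply, repS_single,
    sgn_two_mul, one_smul]
  module

open IsCherednikTriple in
theorem rep_P_single (k : ℤ) (g : ℂ[X]) :
    P repS repX (Finsupp.single (2 * k) g) = Finsupp.single (2 * (k + 1)) (C (1 / 2) * g) := by
  simp only [P, LinearMap.smul_apply, Module.End.mul_apply, rep_avg_single, repX_single,
    Finsupp.smul_single, C_mul']
  congr 1
  ring

open IsCherednikTriple in
theorem rep_Q_single (c : ℂ) (k : ℤ) (g : ℂ[X]) :
    Q repS (repXi c) (Finsupp.single (2 * k) g) = Finsupp.single (2 * (k - 1))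
      (C (-(1 / 2)) * (dunkl c (2 * k - 1) * dunkl c (2 * k)) * g) := by
  simp only [Q, LinearMap.smul_apply, Module.End.mul_apply, rep_avg_single, repXi_single,
    Finsupp.smul_single, ← C_mul', mul_assoc]
  congr 1
  ring

open IsCherednikTriple in
theorem rep_K_single (c : ℂ) (g : ℂ[X]) :
    K c repS repX (repXi c) (Finsupp.single 0 g) =
      Finsupp.single 0 ((X + C (1 / 2 - c)) * g) := by
  have h := rep_avg_single 0 g
  rw [mul_zero] at h
  simp only [K, LinearMap.smul_apply, LinearMap.add_apply, Module.End.mul_apply, h, repXi_single,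
    repX_single, Finsupp.smul_single, sub_add_cancel, ← Finsupp.single_add, dunkl]
  rw [add_mul X (C (1 / 2 - c)) g, C_mul']
  simp [sgn]

end Representation

/-! ### A spanning set of the central quotient -/

section Spanning

open Polynomial

/-- Elements `p, h, q` of a ℂ-algebra satisfying the relations of `e₊, h, e₋` in
`U(sl₂)/⟨C - λ⟩`. -/
structure IsCasimirTriple {B : Type*} [Ring B] [Algebra ℂ B] (lam : ℂ) (p h q : B) : Prop where
  h_p : h * p - p * h - (2 : ℂ) • p = 0
  h_q : h * q - q * h + (2 : ℂ) • q = 0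
  p_q : p * q - q * p - h = 0
  casimir : p * q + q * p + (1 / 2 : ℂ) • (h * h) - lam • 1 = 0

/-- The weight `2k` monomial: `pᵏ` for `k ≥ 0` and `q⁻ᵏ` for `k < 0`. -/
def wt {B : Type*} [Ring B] (p q : B) : ℤ → B
  | Int.ofNat n => p ^ n
  | Int.negSucc n => q ^ (n + 1)

/-- The map `(f_k) ↦ ∑ₖ wt k * f_k(h)`. -/
noncomputable def wtSum {B : Type*} [Ring B] [Algebra ℂ B] (p h q : B) : (ℤ →₀ ℂ[X]) →ₗ[ℂ] B :=
  Finsupp.lsum ℂ fun k => LinearMap.mulLeft ℂ (wt p q k) ∘ₗ (aeval h).toLinearMap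

theorem wtSum_single {B : Type*} [Ring B] [Algebra ℂ B] (p h q : B) (k : ℤ) (f : ℂ[X]) :
    wtSum p h q (Finsupp.single k f) = wt p q k * aeval h f := by
  simp [wtSum]

/-- If `h` acts on `w` with weight `r`, then `f(h) w = w f(h + r)`. -/
theorem aeval_mul_of_weight {B : Type*} [Ring B] [Algebra ℂ B] {h w : B} {r : ℂ}
    (hw : h * w = w * (h + r • 1)) (f : ℂ[X]) :
    aeval h f * w = w * aeval h (f.comp (X + C r)) := by
  induction f using Polynomial.induction_on with
  | C a => simp [Algebra.commutes]
  | add f g hf hg => simp only [map_add, add_mul, add_comp, mul_add, hf, hg]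
  | monomial n a ih =>
    rw [pow_succ', ← mul_assoc, mul_comm (C a) X, mul_assoc, map_mul, aeval_X, mul_assoc, ih,
      ← mul_assoc, hw, mul_comp, map_mul, mul_assoc]
    simp [Algebra.algebraMap_eq_smul_one]

theorem weight_pow {B : Type*} [Ring B] [Algebra ℂ B] {h w : B} {r : ℂ}
    (hw : h * w = w * (h + r • 1)) (n : ℕ) : h * w ^ n = w ^ n * (h + ((n : ℂ) * r) • 1) := by
  induction n with
  | zero => simp
  | succ n ih =>
    rw [pow_succ, ← mul_assoc, ih, mul_assoc, add_mul, hw]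
    simp only [mul_add, mul_smul_comm, smul_mul_assoc, one_mul, mul_one, mul_assoc]
    push_cast
    module

namespace IsCasimirTriple

variable {B : Type*} [Ring B] [Algebra ℂ B] {lam : ℂ} {p h q : B}

theorem weight_p (T : IsCasimirTriple lam p h q) : h * p = p * (h + (2 : ℂ) • 1) := by
  rw [← sub_eq_zero, ← T.h_p, mul_add, mul_smul_comm, mul_one]
  abel

theorem weight_q (T : IsCasimirTriple lam p h q) : h * q = q * (h + (-2 : ℂ) • 1) := by
  rw [← sub_eq_zero, ← T.h_q, mul_add, mul_smul_comm, mul_one]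
  module

theorem p_q_eq (T : IsCasimirTriple lam p h q) :
    p * q = aeval h (C (1 / 2) * (C lam - C (1 / 2) * X ^ 2 + X)) := by
  have h1 := T.p_q
  have h2 := T.casimir
  simp only [map_mul, map_add, map_sub, aeval_C, aeval_X,
    Algebra.algebraMap_eq_smul_one, smul_mul_assoc, one_mul, pow_two]
  rw [← sub_eq_zero]
  calc _ = (1 / 2 : ℂ) • (p * q - q * p - h) +
      (1 / 2 : ℂ) • (p * q + q * p + (1 / 2 : ℂ) • (h * h) - lam • 1) := by module
    _ = 0 := by rw [h1, h2]; simp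

theorem q_p_eq (T : IsCasimirTriple lam p h q) :
    q * p = aeval h (C (1 / 2) * (C lam - C (1 / 2) * X ^ 2 - X)) := by
  have h1 := T.p_q
  have h2 := T.casimir
  simp only [map_mul, map_sub, aeval_C, aeval_X,
    Algebra.algebraMap_eq_smul_one, smul_mul_assoc, one_mul, pow_two]
  rw [← sub_eq_zero]
  calc _ = (-(1 / 2) : ℂ) • (p * q - q * p - h) +
      (1 / 2 : ℂ) • (p * q + q * p + (1 / 2 : ℂ) • (h * h) - lam • 1) := by module
    _ = 0 := by rw [h1, h2]; simp

theorem h_wt (T : IsCasimirTriple lam p h q) (k : ℤ) :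
    ∃ f : ℂ[X], h * wt p q k = wt p q k * aeval h f := by
  rcases k with n | n
  · have h0 := aeval_mul_of_weight (weight_pow T.weight_p n) X
    rw [aeval_X] at h0
    exact ⟨_, h0⟩
  · have h0 := aeval_mul_of_weight (weight_pow T.weight_q (n + 1)) X
    rw [aeval_X] at h0
    exact ⟨_, h0⟩

theorem p_wt (T : IsCasimirTriple lam p h q) (k : ℤ) :
    ∃ f : ℂ[X], p * wt p q k = wt p q (k + 1) * aeval h f := by
  rcases k with n | n
  · exact ⟨1, by rw [map_one, mul_one]; exact (pow_succ' p n).symm⟩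
  · have key : p * q ^ (n + 1) = q ^ n * aeval h ((C (1 / 2) * (C lam - C (1 / 2) * X ^ 2 + X)).comp
        (X + C ((n : ℂ) * -2))) := by
      rw [pow_succ', ← mul_assoc, T.p_q_eq, aeval_mul_of_weight (weight_pow T.weight_q n)]
    refine ⟨_, key.trans (congrArg (· * _) ?_)⟩
    rcases n with _ | n
    · exact (pow_zero q).trans (pow_zero p).symm
    · rfl

theorem q_wt (T : IsCasimirTriple lam p h q) (k : ℤ) :
    ∃ f : ℂ[X], q * wt p q k = wt p q (k - 1) * aeval h f := by
  rcases k with n | n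
  · rcases n with _ | n
    · refine ⟨1, ?_⟩
      rw [map_one, mul_one, show wt p q (Int.ofNat 0) = 1 from pow_zero p]
      exact (mul_one q).trans (pow_one q).symm
    · have key : q * p ^ (n + 1) = p ^ n *
          aeval h ((C (1 / 2) * (C lam - C (1 / 2) * X ^ 2 - X)).comp (X + C ((n : ℂ) * 2))) := by
        rw [pow_succ', ← mul_assoc, T.q_p_eq, aeval_mul_of_weight (weight_pow T.weight_p n)]
      refine ⟨_, key.trans (congrArg (· * _) ?_)⟩
      have : Int.ofNat (n + 1) - 1 = Int.ofNat n := by simp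
      rw [this]
      rfl
  · exact ⟨1, by rw [map_one, mul_one]; exact (pow_succ' q (n + 1)).symm⟩

theorem mul_mem_range (T : IsCasimirTriple lam p h q) {u : B} (hu : u = p ∨ u = h ∨ u = q) {w : B}
    (hw : w ∈ LinearMap.range (wtSum p h q)) : u * w ∈ LinearMap.range (wtSum p h q) := by
  obtain ⟨g, rfl⟩ := hw
  induction g using Finsupp.induction_linear with
  | zero => simp
  | add f g hf hg => rw [map_add, mul_add]; exact add_mem hf hg
  | single k f =>
    have key : ∃ (k' : ℤ) (f' : ℂ[X]), u * wt p q k = wt p q k' * aeval h f' := by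
      rcases hu with rfl | rfl | rfl
      · exact ⟨_, T.p_wt k⟩
      · exact ⟨_, T.h_wt k⟩
      · exact ⟨_, T.q_wt k⟩
    obtain ⟨k', f', hk⟩ := key
    exact ⟨Finsupp.single k' (f' * f), by
      rw [wtSum_single, wtSum_single, ← mul_assoc, hk, map_mul, mul_assoc]⟩

end IsCasimirTriple

theorem sl2CasimirQuot_isCasimirTriple (lam : ℂ) : IsCasimirTriple lam
    (RingQuot.mkAlgHom ℂ (Sl2CasimirRel lam) (ι ℂ 0))
    (RingQuot.mkAlgHom ℂ (Sl2CasimirRel lam) (ι ℂ 1))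
    (RingQuot.mkAlgHom ℂ (Sl2CasimirRel lam) (ι ℂ 2)) where
  h_p := by
    have h := RingQuot.mkAlgHom_rel ℂ (Sl2CasimirRel.h_ep (lam := lam))
    simpa only [map_sub, map_mul, map_smul, map_zero] using h
  h_q := by
    have h := RingQuot.mkAlgHom_rel ℂ (Sl2CasimirRel.h_em (lam := lam))
    simpa only [map_sub, map_add, map_mul, map_smul, map_zero] using h
  p_q := by
    have h := RingQuot.mkAlgHom_rel ℂ (Sl2CasimirRel.ep_em (lam := lam))
    simpa only [map_sub, map_mul, map_zero] using h
  casimir := by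
    have h := RingQuot.mkAlgHom_rel ℂ (Sl2CasimirRel.casimir (lam := lam))
    simpa only [map_sub, map_add, map_mul, map_smul, map_zero, AlgHom.commutes,
      Algebra.algebraMap_eq_smul_one, map_one] using h

/-- A subspace of a quotient of a free algebra that is stable under left multiplication by the
generators is a left ideal. -/
theorem mem_of_mul_stable {X : Type*} {r : FreeAlgebra ℂ X → FreeAlgebra ℂ X → Prop}
    (M : Submodule ℂ (RingQuot r))
    (hM : ∀ i, ∀ w ∈ M, RingQuot.mkAlgHom ℂ r (ι ℂ i) * w ∈ M) (a : RingQuot r) :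
    ∀ w ∈ M, a * w ∈ M := by
  obtain ⟨a, rfl⟩ := RingQuot.mkAlgHom_surjective ℂ r a
  induction a using FreeAlgebra.induction with
  | grade0 z =>
    intro w hw
    rw [AlgHom.commutes, ← Algebra.smul_def]
    exact M.smul_mem z hw
  | grade1 i => exact hM i
  | mul a b ha hb =>
    intro w hw
    rw [map_mul, mul_assoc]
    exact ha _ (hb _ hw)
  | add a b ha hb =>
    intro w hw
    rw [map_add, add_mul]
    exact M.add_mem (ha _ hw) (hb _ hw)

/-- The elements `e₊ⁱ f(h)` and `e₋ʲ f(h)` span `U(sl₂)/⟨C - λ⟩`: the Casimir relation turns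
`e₊e₋` and `e₋e₊` into polynomials in `h`. -/
theorem wtSum_surjective (lam : ℂ) : Function.Surjective (wtSum
    (RingQuot.mkAlgHom ℂ (Sl2CasimirRel lam) (ι ℂ 0))
    (RingQuot.mkAlgHom ℂ (Sl2CasimirRel lam) (ι ℂ 1))
    (RingQuot.mkAlgHom ℂ (Sl2CasimirRel lam) (ι ℂ 2))) := by
  intro a
  have hone := mem_of_mul_stable (LinearMap.range (wtSum
    (RingQuot.mkAlgHom ℂ (Sl2CasimirRel lam) (ι ℂ 0))
    (RingQuot.mkAlgHom ℂ (Sl2CasimirRel lam) (ι ℂ 1))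
    (RingQuot.mkAlgHom ℂ (Sl2CasimirRel lam) (ι ℂ 2)))) (fun i w hw =>
      (sl2CasimirQuot_isCasimirTriple lam).mul_mem_range (by fin_cases i <;> simp) hw) a 1
    ⟨Finsupp.single 0 1, by
      rw [wtSum_single, map_one, mul_one]; exact pow_zero _⟩
  rwa [mul_one] at hone

end Spanning

/-! ### Separating the spanning set -/

section Faithful

open Polynomial IsCherednikTriple

variable {B : Type*} [Ring B] [Algebra ℂ B] {c : ℂ} {p h q : B}
  {Φ : B →ₗ[ℂ] Module.End ℂ (ℤ →₀ ℂ[X])}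

/-- `f(h)` acts on `x^X` by the scalar `f(X + 1/2 - c)`. -/
theorem rep_aeval_single (hone : Φ 1 = avg repS) (hmul : ∀ a b, Φ (a * b) = Φ a * Φ b)
    (hh : Φ h = K c repS repX (repXi c)) (f g : ℂ[X]) :
    Φ (aeval h f) (Finsupp.single 0 g) =
      Finsupp.single 0 (f.comp (X + C (1 / 2 - c)) * g) := by
  induction f using Polynomial.induction_on with
  | C a =>
    have h0 := rep_avg_single 0 g
    rw [mul_zero] at h0
    rw [aeval_C, Algebra.algebraMap_eq_smul_one, map_smul, hone, LinearMap.smul_apply, h0, C_comp,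
      Finsupp.smul_single, C_mul']
  | add f₁ f₂ h₁ h₂ =>
    rw [map_add, map_add, LinearMap.add_apply, h₁, h₂, add_comp, add_mul, Finsupp.single_add]
  | monomial n a ih =>
    rw [pow_succ', ← mul_assoc, mul_comm (C a) X, mul_assoc, map_mul, aeval_X, hmul,
      Module.End.mul_apply, ih, hh, rep_K_single, mul_comp X, X_comp, mul_assoc]

/-- The weight monomials shift the exponent, up to a nonzero polynomial factor. -/
theorem rep_wt_single (hone : Φ 1 = avg repS) (hmul : ∀ a b, Φ (a * b) = Φ a * Φ b)
    (hp : Φ p = P repS repX) (hq : Φ q = Q repS (repXi c)) (k : ℤ) :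
    ∃ κ : ℂ[X], κ ≠ 0 ∧ ∀ g, Φ (wt p q k) (Finsupp.single 0 g) =
      Finsupp.single (2 * k) (κ * g) := by
  have h0 : ∀ g, Φ 1 (Finsupp.single 0 g) = Finsupp.single 0 g := fun g => by
    have h0 := rep_avg_single 0 g
    rwa [mul_zero, ← hone] at h0
  rcases k with n | n
  · change ∃ κ : ℂ[X], κ ≠ 0 ∧ ∀ g, Φ (p ^ n) (Finsupp.single 0 g) =
      Finsupp.single (2 * (n : ℤ)) (κ * g)
    induction n with
    | zero => exact ⟨1, one_ne_zero, fun g => by simp [h0]⟩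
    | succ n ih =>
      obtain ⟨κ, hκ, hn⟩ := ih
      refine ⟨C (1 / 2) * κ, mul_ne_zero (by simp) hκ, fun g => ?_⟩
      rw [pow_succ', hmul, Module.End.mul_apply, hn, hp, rep_P_single, mul_assoc]
      push_cast
      rfl
  · have key : ∀ n : ℕ, ∃ κ : ℂ[X], κ ≠ 0 ∧ ∀ g, Φ (q ^ n) (Finsupp.single 0 g) =
        Finsupp.single (2 * (-n : ℤ)) (κ * g) := by
      intro n
      induction n with
      | zero => exact ⟨1, one_ne_zero, fun g => by simp [h0]⟩
      | succ n ih =>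
        obtain ⟨κ, hκ, hn⟩ := ih
        refine ⟨C (-(1 / 2)) * (dunkl c (2 * (-n : ℤ) - 1) * dunkl c (2 * (-n : ℤ))) * κ,
          mul_ne_zero (mul_ne_zero (by simp)
            (mul_ne_zero (dunkl_ne_zero _ _) (dunkl_ne_zero _ _))) hκ, fun g => ?_⟩
        rw [pow_succ', hmul, Module.End.mul_apply, hn, hq, rep_Q_single, mul_assoc _ κ g]
        congr 1
        push_cast
        ring
    exact key (n + 1)

/-- The generic Laurent representation separates the elements `∑ₖ wt k * f_k(h)`: applied to
`x^X`, the coefficient of `x^(X+2k)` is a nonzero multiple of `f_k(X + 1/2 - c)`. -/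
theorem eq_zero_of_rep_wtSum (hone : Φ 1 = avg repS) (hmul : ∀ a b, Φ (a * b) = Φ a * Φ b)
    (hp : Φ p = P repS repX) (hh : Φ h = K c repS repX (repXi c)) (hq : Φ q = Q repS (repXi c))
    (f : ℤ →₀ ℂ[X]) (hf : Φ (wtSum p h q f) = 0) : f = 0 := by
  choose κ hκ hact using rep_wt_single hone hmul hp hq
  have key : ∀ (f : ℤ →₀ ℂ[X]) (k : ℤ), Φ (wtSum p h q f) (Finsupp.single 0 1) (2 * k) =
      κ k * (f k).comp (X + C (1 / 2 - c)) := by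
    intro f k
    induction f using Finsupp.induction_linear with
    | zero => simp
    | add f g hf hg => simp only [map_add, LinearMap.add_apply, Finsupp.add_apply, hf, hg, add_comp,
        mul_add]
    | single j g =>
      rw [wtSum_single, hmul, Module.End.mul_apply, rep_aeval_single hone hmul hh, hact, mul_one]
      by_cases hjk : j = k
      · subst hjk
        simp
      · rw [Finsupp.single_eq_of_ne (by omega), Finsupp.single_eq_of_ne (by omega)]
        simp
  ext1 k
  have h0 := key f k
  rw [hf, LinearMap.zero_apply, Finsupp.zero_apply] at h0
  have h1 := (mul_eq_zero.mp h0.symm).resolve_left (hκ k)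
  rw [← taylor_apply] at h1
  exact taylor_injective _ (h1.trans (map_zero _).symm)

end Faithful

/-- The spherical subalgebra `B_{1,c} = e H_{1,c} e` of type `A₁` is isomorphic, as a
ℂ-algebra with unit `e`, to `U(sl₂(ℂ))/⟨C - (1/2)(c - 1/2)(c + 3/2)⟩`, with the image
of `e₊` sent to `(1/2) e x² e` and the image of `e₋` sent to `-(1/2) e ξ² e`. -/
theorem spherical_A1_iso_sl2 (c : ℂ) :
    ∃ φ : Sl2CasimirQuot ((1/2 : ℂ) * (c - 1/2) * (c + 3/2)) →ₗ[ℂ] CherednikA1 1 c,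
      Function.Injective φ ∧
      Set.range φ = {z : CherednikA1 1 c | CherednikA1.e 1 c * z * CherednikA1.e 1 c = z} ∧
      φ 1 = CherednikA1.e 1 c ∧
      (∀ a b, φ (a * b) = φ a * φ b) ∧
      φ (RingQuot.mkAlgHom ℂ (Sl2CasimirRel ((1/2 : ℂ) * (c - 1/2) * (c + 3/2)))
          (ι ℂ (0 : Fin 3))) =
        (1/2 : ℂ) • (CherednikA1.e 1 c * CherednikA1.x 1 c * CherednikA1.x 1 c *
          CherednikA1.e 1 c) ∧
      φ (RingQuot.mkAlgHom ℂ (Sl2CasimirRel ((1/2 : ℂ) * (c - 1/2) * (c + 3/2)))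
          (ι ℂ (2 : Fin 3))) =
        (-(1/2) : ℂ) • (CherednikA1.e 1 c * CherednikA1.xi 1 c * CherednikA1.xi 1 c *
          CherednikA1.e 1 c) := by
  have T := CherednikA1.isCherednikTriple c
  have he : CherednikA1.e 1 c = IsCherednikTriple.avg (CherednikA1.S 1 c) := rfl
  obtain ⟨φ, hone, hmul, hcorner, hp, hh, hq⟩ := exists_corner_lift T.avg_idem
    (by rw [T.avg_P, T.P_avg]) (by rw [T.avg_K, T.K_avg]) (by rw [T.avg_Q, T.Q_avg])
    T.rel_KP T.rel_KQ T.rel_PQ T.rel_casimir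
  have hl : ∀ a, IsCherednikTriple.avg (CherednikA1.S 1 c) * φ a = φ a := fun a => by
    rw [← hcorner a, ← mul_assoc, ← mul_assoc, T.avg_idem.eq]
  refine ⟨φ, ?_, ?_, hone, hmul, hp.trans T.P_eq.symm, hq.trans T.Q_eq.symm⟩
  · obtain ⟨ρ, hS, hx, hξ⟩ := exists_rep (rep_isCherednikTriple c)
    have havg : ρ (IsCherednikTriple.avg (CherednikA1.S 1 c)) = IsCherednikTriple.avg repS := by
      simp only [IsCherednikTriple.avg, map_smul, map_add, map_one, hS]
    rw [← LinearMap.ker_eq_bot, LinearMap.ker_eq_bot']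
    intro a ha
    obtain ⟨f, rfl⟩ := wtSum_surjective _ a
    have hf0 : f = 0 := by
      refine eq_zero_of_rep_wtSum (c := c) (Φ := ρ.toLinearMap ∘ₗ φ)
        (p := RingQuot.mkAlgHom ℂ (Sl2CasimirRel _) (ι ℂ 0))
        (h := RingQuot.mkAlgHom ℂ (Sl2CasimirRel _) (ι ℂ 1))
        (q := RingQuot.mkAlgHom ℂ (Sl2CasimirRel _) (ι ℂ 2)) ?_ ?_ ?_ ?_ ?_ f ?_
      · simp only [LinearMap.comp_apply, AlgHom.toLinearMap_apply, hone, havg]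
      · intro a b
        simp only [LinearMap.comp_apply, AlgHom.toLinearMap_apply, hmul, map_mul]
      · simp only [LinearMap.comp_apply, AlgHom.toLinearMap_apply, hp, IsCherednikTriple.P, map_mul,
          map_smul, havg, hx]
      · simp only [LinearMap.comp_apply, AlgHom.toLinearMap_apply, hh, IsCherednikTriple.K, map_mul,
          map_smul, map_add, havg, hx, hξ]
      · simp only [LinearMap.comp_apply, AlgHom.toLinearMap_apply, hq, IsCherednikTriple.Q, map_mul,
          map_smul, havg, hξ]
      · rw [LinearMap.comp_apply, ha, map_zero]
    rw [hf0, map_zero]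
  · ext z
    constructor
    · rintro ⟨a, rfl⟩
      exact hcorner a
    · intro hz
      -- `He` is contained in `φ(B) + x φ(B) + ξ φ(B)`, a left ideal containing `e`.
      let M : Submodule ℂ (CherednikA1 1 c) := LinearMap.range φ ⊔
        (LinearMap.range φ).map (LinearMap.mulLeft ℂ (CherednikA1.x 1 c)) ⊔
        (LinearMap.range φ).map (LinearMap.mulLeft ℂ (CherednikA1.xi 1 c))
      have hM : ∀ w, w ∈ M ↔ ∃ a b d, w = φ a + CherednikA1.x 1 c * φ b +
          CherednikA1.xi 1 c * φ d := by
        intro w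
        simp only [M, Submodule.mem_sup, Submodule.mem_map, LinearMap.mem_range,
          LinearMap.mulLeft_apply]
        constructor
        · rintro ⟨_, ⟨_, ⟨a, rfl⟩, _, ⟨_, ⟨b, rfl⟩, rfl⟩, rfl⟩, _, ⟨_, ⟨d, rfl⟩, rfl⟩, rfl⟩
          exact ⟨a, b, d, rfl⟩
        · rintro ⟨a, b, d, rfl⟩
          exact ⟨_, ⟨_, ⟨a, rfl⟩, _, ⟨_, ⟨b, rfl⟩, rfl⟩, rfl⟩, _, ⟨_, ⟨d, rfl⟩, rfl⟩, rfl⟩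
      have hze : z * CherednikA1.e 1 c ∈ M := by
        refine mem_of_mul_stable M (fun i w hw => ?_) z _ ((hM _).mpr ⟨1, 0, 0, ?_⟩)
        · obtain ⟨a, b, d, rfl⟩ := (hM w).mp hw
          refine (hM _).mpr (T.mul_stable φ hmul hcorner hp hh hq _ ?_ a b d)
          fin_cases i
          · exact Or.inl rfl
          · exact Or.inr (Or.inl rfl)
          · exact Or.inr (Or.inr rfl)
        · rw [hone, map_zero, mul_zero, mul_zero, add_zero, add_zero, he]
      obtain ⟨a, b, d, h⟩ := (hM _).mp hze
      refine ⟨a, ?_⟩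
      rw [← hz, mul_assoc (CherednikA1.e 1 c) z, h, he, T.avg_mul_sum (hl a) (hl b) (hl d)]
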